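/- (a) A set of unordered unranked Σ-trees is MSO-definable if and only if it is of the form L_u(A_c) for a counting nondeterministic unranked tree automaton A_c. (b) A unary query over unordered unranked Σ-trees is MSO-definable if and only if it is definable by a counting query automaton under the existential semantics, if and only if it is definable by a counting query automaton under the universal semantics. -/

import Mathlib

/-!
A language of trees is *recognizable* if membership depends on a bottom-up evaluation in a finite
commutative monoid, in which the value of a node depends on its label and on the sum of the values
of its children. Since the children are unordered, automata can only count them up to thresholds,
and this is reflected by requiring the monoid to be *aperiodic*: `n • m` is constant for large `n`.
Recognizable languages are closed under complement, intersection and, by the subset construction,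
relabelling, the point being that the sets of elements of a finite aperiodic commutative monoid form
an aperiodic monoid again. Encoding valuations in the labels, every MSO formula therefore defines a
recognizable language.

Conversely a counting automaton guesses the value of each node and verifies the guess by counting
children, and MSO expresses the existence of a run by quantifying over the sets of nodes in each
state. The universal semantics is reduced to the existential one by complementing both the query
and the selection set.
-/

namespace UnrankedTrees

/-! ### Unranked trees: tree domains and ordered unranked Σ-trees.
Nodes are finite strings over ℕ; a tree domain is a finite prefix-closed set
of nodes such that `s ++ [i] ∈ D` implies `s ++ [j] ∈ D` for all `j < i`. -/

abbrev Node : Type := List ℕ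

/-- An ordered unranked tree over alphabet `A`: a tree domain with a labeling. -/
structure UTree (A : Type) where
  dom : Finset Node
  nil_mem : ([] : Node) ∈ dom
  prefix_closed : ∀ ⦃s t : Node⦄, s ∈ dom → t <+: s → t ∈ dom
  sib_closed : ∀ ⦃s : Node⦄ ⦃i j : ℕ⦄, s ++ [i] ∈ dom → j < i → s ++ [j] ∈ dom
  label : Node → A

namespace UTree

variable {A : Type}

/-- The child relation `≺_ch`. -/
def childR (T : UTree A) (s t : Node) : Prop :=
  s ∈ T.dom ∧ t ∈ T.dom ∧ ∃ i : ℕ, t = s ++ [i]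

/-- The descendant-or-self relation `≺*_ch` (the prefix relation). -/
def descR (T : UTree A) (s t : Node) : Prop :=
  s ∈ T.dom ∧ t ∈ T.dom ∧ s <+: t

/-- The next-sibling relation `≺_ns`. -/
def nsR (T : UTree A) (s t : Node) : Prop :=
  s ∈ T.dom ∧ t ∈ T.dom ∧ ∃ (u : Node) (i : ℕ), s = u ++ [i] ∧ t = u ++ [i + 1]

/-- The sibling ordering `≺*_ns` (reflexive-transitive closure of next-sibling). -/
def sibR (T : UTree A) (s t : Node) : Prop :=
  s ∈ T.dom ∧ t ∈ T.dom ∧ ∃ (u : Node) (i j : ℕ), s = u ++ [i] ∧ t = u ++ [j] ∧ i ≤ j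

/-- The first-child relation `≺_fc`. -/
def firstChildR (T : UTree A) (s t : Node) : Prop :=
  s ∈ T.dom ∧ t ∈ T.dom ∧ t = s ++ [0]

/-- The number of children of a node. -/
noncomputable def childCount (T : UTree A) (s : Node) : ℕ :=
  Set.ncard {i : ℕ | s ++ [i] ∈ T.dom}

/-- The list of children of a node `s`, in sibling order: `s·0, …, s·(n-1)`. -/
noncomputable def childrenList (T : UTree A) (s : Node) : List Node :=
  (List.range (T.childCount s)).map fun i => s ++ [i]

/-- `s` is a leaf of `T`. -/
def isLeaf (T : UTree A) (s : Node) : Prop :=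
  s ∈ T.dom ∧ ∀ i : ℕ, s ++ [i] ∉ T.dom

/-- `s` has no next sibling in `T` (the root also counts as "last"). -/
def isLast (T : UTree A) (s : Node) : Prop :=
  s = [] ∨ ∃ (u : Node) (i : ℕ), s = u ++ [i] ∧ u ++ [i + 1] ∉ T.dom

end UTree

/-! ### MSO over *unordered* unranked trees (no sibling order in the
vocabulary: atoms are x = y, x ≺*_ch y, P_a(x), X(x)). -/

inductive MSOu (A : Type) : Type where
  | eq : ℕ → ℕ → MSOu A
  | desc : ℕ → ℕ → MSOu A
  | lab : A → ℕ → MSOu A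
  | mem : ℕ → ℕ → MSOu A
  | not : MSOu A → MSOu A
  | and : MSOu A → MSOu A → MSOu A
  | exFO : ℕ → MSOu A → MSOu A
  | exSO : ℕ → MSOu A → MSOu A

namespace MSOu

variable {A : Type}

def Sat (T : UTree A) (v : ℕ → Node) (V : ℕ → Set Node) : MSOu A → Prop
  | .eq x y => v x = v y
  | .desc x y => T.descR (v x) (v y)
  | .lab a x => v x ∈ T.dom ∧ T.label (v x) = a
  | .mem X x => v x ∈ V X
  | .not φ => ¬ Sat T v V φ
  | .and φ ψ => Sat T v V φ ∧ Sat T v V ψ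
  | .exFO n φ => ∃ s ∈ T.dom, Sat T (Function.update v n s) V φ
  | .exSO n φ => ∃ S : Set Node, S ⊆ ↑T.dom ∧ Sat T v (Function.update V n S) φ

def DefinesB (φ : MSOu A) (L : Set (UTree A)) : Prop :=
  ∀ (T : UTree A) (v : ℕ → Node) (V : ℕ → Set Node), T ∈ L ↔ Sat T v V φ

def DefinesU (φ : MSOu A) (Q : UTree A → Set Node) : Prop :=
  ∀ (T : UTree A) (v : ℕ → Node) (V : ℕ → Set Node) (s : Node), s ∈ T.dom →
    (s ∈ Q T ↔ Sat T (Function.update v 0 s) V φ)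

end MSOu

/-! ### Counting unranked tree automata (for unordered trees). -/

/-- Boolean formulas over a set `V` of variables. -/
inductive BForm (V : Type) : Type where
  | tru : BForm V
  | var : V → BForm V
  | not : BForm V → BForm V
  | and : BForm V → BForm V → BForm V

def BForm.Eval {V : Type} (f : V → Prop) : BForm V → Prop
  | .tru => True
  | .var v => f v
  | .not φ => ¬ BForm.Eval f φ
  | .and φ ψ => BForm.Eval f φ ∧ BForm.Eval f ψ

/-- A counting nondeterministic unranked tree automaton: `δ(q,a)` is a Boolean
function over the variables `v_q^k` (`q ∈ Q`, `k > 0`); the pair `(q, k) : Q × ℕ`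
stands for the variable `v_q^{k+1}`, i.e. "at least `k+1` children in state `q`". -/
structure CNUTA (A : Type) where
  Q : Type
  fintype_Q : Fintype Q
  F : Set Q
  δ : Q → A → BForm (Q × ℕ)

namespace CNUTA

variable {A : Type}

/-- A run: at each node labelled `a` in state `q`, the Boolean function
`δ(q,a)` evaluates to true, where `v_{q'}^k` is true iff the node has at least
`k` children in state `q'`. -/
def IsRun (N : CNUTA A) (T : UTree A) (ρ : Node → N.Q) : Prop :=
  ∀ s ∈ T.dom, (N.δ (ρ s) (T.label s)).Eval fun qk =>
    qk.2 + 1 ≤ Set.ncard {i : ℕ | s ++ [i] ∈ T.dom ∧ ρ (s ++ [i]) = qk.1}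

def Accepts (N : CNUTA A) (T : UTree A) : Prop :=
  ∃ ρ : Node → N.Q, N.IsRun T ρ ∧ ρ [] ∈ N.F

end CNUTA

/-- A counting query automaton: a counting NUTA with a selection set. -/
structure CQA (A : Type) where
  N : CNUTA A
  S : Set (N.Q × A)

namespace CQA

variable {A : Type}

def existsSem (QA : CQA A) (T : UTree A) : Set Node :=
  {s | s ∈ T.dom ∧ ∃ ρ : Node → QA.N.Q, QA.N.IsRun T ρ ∧ ρ [] ∈ QA.N.F ∧
    (ρ s, T.label s) ∈ QA.S}

def forallSem (QA : CQA A) (T : UTree A) : Set Node :=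
  {s | s ∈ T.dom ∧ ∀ ρ : Node → QA.N.Q, QA.N.IsRun T ρ → ρ [] ∈ QA.N.F →
    (ρ s, T.label s) ∈ QA.S}

end CQA

section

open scoped Pointwise

variable {A B C : Type}

/-! ### Aperiodic commutative monoids -/

/-- An additive monoid is aperiodic if the multiples of its elements become constant, from a
threshold `K` on which is the same for all elements. Sums in a commutative aperiodic monoid depend
only on the multiplicities of the summands up to that threshold. -/
def IsAperiodic (M : Type*) [AddMonoid M] : Prop :=
  ∃ K : ℕ, ∀ n, K ≤ n → ∀ m : M, n • m = K • m

lemma isAperiodic_of_succ_nsmul {M : Type*} [AddMonoid M] {K : ℕ}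
    (h : ∀ m : M, (K + 1) • m = K • m) : IsAperiodic M := by
  refine ⟨K, fun n hn m => ?_⟩
  induction n, hn using Nat.le_induction with
  | base => rfl
  | succ n _ ih => rw [succ_nsmul, ih, ← succ_nsmul, h]

lemma IsAperiodic.prod {M N : Type*} [AddMonoid M] [AddMonoid N] (hM : IsAperiodic M)
    (hN : IsAperiodic N) : IsAperiodic (M × N) := by
  obtain ⟨K, hK⟩ := hM
  obtain ⟨L, hL⟩ := hN
  refine isAperiodic_of_succ_nsmul (K := max K L) fun m => Prod.ext ?_ ?_
  · simp only [Prod.smul_fst, hK (max K L) (by omega), hK (max K L + 1) (by omega)]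
  · simp only [Prod.smul_snd, hL (max K L) (by omega), hL (max K L + 1) (by omega)]

lemma mem_nsmul_set_iff_exists_multiset {M : Type*} [AddCommMonoid M] {S : Set M} {n : ℕ} {x : M} :
    x ∈ n • S ↔ ∃ s : Multiset M, s.card = n ∧ (∀ m ∈ s, m ∈ S) ∧ s.sum = x := by
  rw [Set.mem_nsmul_iff_sum]
  constructor
  · rintro ⟨f, hf, rfl⟩
    exact ⟨Finset.univ.val.map f, by simp, by simpa using hf, rfl⟩
  · rintro ⟨s, rfl, hS, rfl⟩
    induction s using Quotient.inductionOn with | _ l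
    exact ⟨l.get, fun i => hS _ (l.get_mem i), Fin.sum_univ_getElem l⟩

lemma exists_replicate_le_of_card_lt {M : Type*} [Finite M] {K : ℕ} {s : Multiset M}
    (hs : Nat.card M * K < s.card) : ∃ m, Multiset.replicate (K + 1) m ≤ s := by
  classical
  have := Fintype.ofFinite M
  have hsum : ∑ _m : M, K < ∑ m : M, s.count m := by
    rwa [Multiset.sum_count_eq_card fun m _ => Finset.mem_univ m, Finset.sum_const, smul_eq_mul,
      Finset.card_univ, ← Nat.card_eq_fintype_card]
  obtain ⟨m, -, hm⟩ := Finset.exists_lt_of_sum_lt hsum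
  exact ⟨m, Multiset.le_count_iff_replicate_le.1 hm⟩

/-- In a sum of more than `Nat.card M * K` elements of `S` some summand `m` occurs more than `K`
times, hence its number of occurrences may be replaced by any number that is at least `K`. -/
lemma nsmul_set_subset_nsmul_set {M : Type*} [AddCommMonoid M] [Finite M] {K : ℕ}
    (hK : ∀ n, K ≤ n → ∀ m : M, n • m = K • m) (S : Set M) {n n' : ℕ}
    (hn : Nat.card M * K < n) (hn' : n ≤ n' + 1) : n • S ⊆ n' • S := by
  intro x hx
  obtain ⟨s, hcard, hS, rfl⟩ := mem_nsmul_set_iff_exists_multiset.1 hx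
  obtain ⟨m, hm⟩ := exists_replicate_le_of_card_lt (hcard ▸ hn)
  obtain ⟨t, rfl⟩ := Multiset.le_iff_exists_add.1 hm
  rw [Multiset.card_add, Multiset.card_replicate] at hcard
  refine mem_nsmul_set_iff_exists_multiset.2
    ⟨Multiset.replicate (n' - t.card) m + t, ?_, fun y hy => hS y ?_, ?_⟩
  · rw [Multiset.card_add, Multiset.card_replicate]
    omega
  · simp only [Multiset.mem_add, Multiset.mem_replicate] at hy ⊢
    tauto
  · rw [Multiset.sum_add, Multiset.sum_add, Multiset.sum_replicate, Multiset.sum_replicate,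
      hK _ (by omega), hK (K + 1) (by omega)]

lemma IsAperiodic.set {M : Type*} [AddCommMonoid M] [Finite M] (hM : IsAperiodic M) :
    IsAperiodic (Set M) := by
  obtain ⟨K, hK⟩ := hM
  refine isAperiodic_of_succ_nsmul (K := Nat.card M * K + 1) fun S => ?_
  exact (nsmul_set_subset_nsmul_set hK S (by omega) le_rfl).antisymm
    (nsmul_set_subset_nsmul_set hK S (by omega) (by omega))

/-- Truth values with disjunction as addition: `⊤` stands for true and `0` for false. -/
abbrev Truth : Type := WithTop Unit

lemma Truth.ite_eq_top_iff (p : Prop) [Decidable p] : (if p then (⊤ : Truth) else 0) = ⊤ ↔ p := by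
  by_cases hp : p <;> simp [hp]

lemma Truth.isAperiodic : IsAperiodic Truth :=
  isAperiodic_of_succ_nsmul (K := 1) fun x => by
    induction x using WithTop.recTopCoe <;> simp [succ_nsmul]

/-! ### Bottom-up evaluation of trees -/

open Classical in
/-- The finite set of children of a node. -/
noncomputable def UTree.children (T : UTree A) (s : Node) : Finset Node :=
  {t ∈ T.dom | T.childR s t}

lemma UTree.mem_children {T : UTree A} {s t : Node} :
    t ∈ T.children s ↔ s ∈ T.dom ∧ t ∈ T.dom ∧ ∃ i, t = s ++ [i] := by
  classical
  exact Finset.mem_filter.trans (and_iff_right_of_imp fun h => h.2.1)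

lemma UTree.mem_dom_of_mem_children {T : UTree A} {s t : Node} (h : t ∈ T.children s) :
    t ∈ T.dom :=
  (mem_children.1 h).2.1

lemma UTree.prefix_of_mem_children {T : UTree A} {s t : Node} (h : t ∈ T.children s) :
    s <+: t := by
  obtain ⟨-, -, i, rfl⟩ := mem_children.1 h
  exact List.prefix_append s [i]

lemma UTree.length_of_mem_children {T : UTree A} {s t : Node} (h : t ∈ T.children s) :
    t.length = s.length + 1 := by
  obtain ⟨-, -, i, rfl⟩ := mem_children.1 h
  exact List.length_append

lemma UTree.codepth_lt_of_mem_children {T : UTree A} {s t : Node} (h : t ∈ T.children s) :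
    T.dom.sup List.length - t.length < T.dom.sup List.length - s.length := by
  have ht : t.length ≤ T.dom.sup List.length :=
    Finset.le_sup (f := List.length) (mem_dom_of_mem_children h)
  rw [length_of_mem_children h] at ht ⊢
  omega

theorem UTree.bottomUp_induction (T : UTree A) {P : Node → Prop}
    (h : ∀ s, (∀ t ∈ T.children s, P t) → P s) (s : Node) : P s :=
  h s fun t _ => T.bottomUp_induction h t
termination_by T.dom.sup List.length - s.length
decreasing_by exact codepth_lt_of_mem_children ‹_›

lemma UTree.prefix_iff_eq_or_exists_mem_children {T : UTree A} {s t : Node} (ht : t ∈ T.dom) :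
    s <+: t ↔ s = t ∨ ∃ u ∈ T.children s, u <+: t := by
  constructor
  · rintro ⟨_ | ⟨i, w⟩, rfl⟩
    · simp
    · have hu : s ++ [i] <+: s ++ i :: w := ⟨w, by simp⟩
      exact Or.inr ⟨s ++ [i], mem_children.2 ⟨T.prefix_closed ht (List.prefix_append _ _),
        T.prefix_closed ht hu, i, rfl⟩, hu⟩
  · rintro (rfl | ⟨u, hu, hut⟩)
    · exact List.prefix_rfl
    · exact (prefix_of_mem_children hu).trans hut

lemma UTree.take_eq_of_mem_children {T : UTree A} {s t u : Node} (ht : t ∈ T.children s)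
    (htu : t <+: u) : u.take (s.length + 1) = t := by
  rw [← length_of_mem_children ht]
  exact (List.prefix_iff_eq_take.1 htu).symm

/-- The tree with the nodes of `T` and the labels given by `ℓ`. -/
def UTree.relabel (T : UTree A) (ℓ : Node → B) : UTree B where
  dom := T.dom
  nil_mem := T.nil_mem
  prefix_closed := T.prefix_closed
  sib_closed := T.sib_closed
  label := ℓ

/-- The tree `T` with the letter substitution `f` applied to all labels. -/
def UTree.map (f : A → B) (T : UTree A) : UTree B :=
  T.relabel fun s => f (T.label s)

/-- The bottom-up value of a node: `step` combines its label with the sum of the values of its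
children. -/
noncomputable def UTree.eval {M : Type*} [AddCommMonoid M] (T : UTree B) (step : B → M → M)
    (s : Node) : M :=
  step (T.label s) (∑ t : T.children s, T.eval step t)
termination_by T.dom.sup List.length - s.length
decreasing_by exact codepth_lt_of_mem_children t.2

section Eval

variable {M N : Type*} [AddCommMonoid M] [AddCommMonoid N]

lemma UTree.eval_eq (T : UTree B) (step : B → M → M) (s : Node) :
    T.eval step s = step (T.label s) (∑ t ∈ T.children s, T.eval step t) := by
  rw [eval, Finset.sum_coe_sort (T.children s) (T.eval step)]

lemma UTree.eq_eval {T : UTree B} {step : B → M → M} {ρ : Node → M}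
    (h : ∀ s ∈ T.dom, ρ s = step (T.label s) (∑ t ∈ T.children s, ρ t)) :
    ∀ s ∈ T.dom, ρ s = T.eval step s := by
  refine T.bottomUp_induction fun s ih hs => ?_
  rw [h s hs, eval_eq]
  congr 1
  exact Finset.sum_congr rfl fun t ht => ih t ht (mem_dom_of_mem_children ht)

lemma UTree.map_eval (T : UTree B) {step : B → M → M} {step' : B → N → N} (f : M →+ N)
    (h : ∀ b m, f (step b m) = step' b (f m)) (s : Node) :
    f (T.eval step s) = T.eval step' s := by
  induction s using T.bottomUp_induction with | _ s ih
  rw [eval_eq, h, map_sum, eval_eq, Finset.sum_congr rfl ih]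

lemma UTree.eval_map (T : UTree A) (f : A → B) (step : B → M → M) (s : Node) :
    (T.map f).eval step s = T.eval (fun a => step (f a)) s := by
  induction s using T.bottomUp_induction with | _ s ih
  rw [eval_eq, eval_eq, ← Finset.sum_congr rfl ih]
  rfl

lemma UTree.eval_relabel_congr (T : UTree A) {ℓ ℓ' : Node → B} (step : B → M → M) (s : Node)
    (hs : s ∈ T.dom) (h : ∀ t ∈ T.dom, s <+: t → ℓ t = ℓ' t) :
    (T.relabel ℓ).eval step s = (T.relabel ℓ').eval step s := by
  induction s using T.bottomUp_induction with | _ s ih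
  have hsum : ∑ t ∈ T.children s, (T.relabel ℓ).eval step t
      = ∑ t ∈ T.children s, (T.relabel ℓ').eval step t :=
    Finset.sum_congr rfl fun t ht => ih t ht (mem_dom_of_mem_children ht) fun u hu htu =>
      h u hu ((prefix_of_mem_children ht).trans htu)
  rw [eval_eq, eval_eq]
  exact congrArg₂ step (h s hs List.prefix_rfl) hsum

end Eval

/-! ### Recognizable tree languages -/

/-- A tree language is recognizable if membership is determined by the value of the root under a
bottom-up evaluation in a finite aperiodic commutative monoid. -/
def Recognizable (L : Set (UTree B)) : Prop :=
  ∃ (M : Type) (_ : AddCommMonoid M) (_ : Finite M) (step : B → M → M) (F : Set M),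
    IsAperiodic M ∧ ∀ T, T ∈ L ↔ T.eval step [] ∈ F

namespace Recognizable

variable {L L' : Set (UTree B)}

lemma compl (hL : Recognizable L) : Recognizable Lᶜ := by
  obtain ⟨M, _, _, step, F, hM, hF⟩ := hL
  exact ⟨M, _, ‹_›, step, Fᶜ, hM, fun T => not_congr (hF T)⟩

lemma inter (hL : Recognizable L) (hL' : Recognizable L') : Recognizable (L ∩ L') := by
  obtain ⟨M, _, _, step, F, hM, hF⟩ := hL
  obtain ⟨N, _, _, step', F', hN, hF'⟩ := hL'
  refine ⟨M × N, _, inferInstance, fun b m => (step b m.1, step' b m.2), F ×ˢ F', hM.prod hN,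
    fun T => ?_⟩
  have hfst := T.map_eval (step := fun b m => (step b m.1, step' b m.2)) (step' := step)
    (AddMonoidHom.fst M N) (fun _ _ => rfl) []
  have hsnd := T.map_eval (step := fun b m => (step b m.1, step' b m.2)) (step' := step')
    (AddMonoidHom.snd M N) (fun _ _ => rfl) []
  rw [Set.mem_inter_iff, hF, hF', ← hfst, ← hsnd]
  rfl

lemma preimage_map {L : Set (UTree C)} (hL : Recognizable L) (f : B → C) :
    Recognizable (UTree.map f ⁻¹' L) := by
  obtain ⟨M, _, _, step, F, hM, hF⟩ := hL
  exact ⟨M, _, ‹_›, fun b => step (f b), F, hM, fun T => by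
    rw [Set.mem_preimage, hF, UTree.eval_map]⟩

lemma relabel_congr (hL : Recognizable L) (T : UTree A) {ℓ ℓ' : Node → B}
    (h : ∀ s ∈ T.dom, ℓ s = ℓ' s) : T.relabel ℓ ∈ L ↔ T.relabel ℓ' ∈ L := by
  obtain ⟨M, _, _, step, F, -, hF⟩ := hL
  rw [hF, hF, T.eval_relabel_congr step [] T.nil_mem fun t ht _ => h t ht]

end Recognizable

section PowerStep

variable {M : Type*} (r : B → C → Prop) (step : C → M → M)

/-- The subset construction: one bottom-up step on sets of values, where a letter `b` may be read
as any letter related to it by `r`. -/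
def powerStep (b : B) (S : Set M) : Set M :=
  {x | ∃ m ∈ S, ∃ c, r b c ∧ step c m = x}

variable {r step} [AddCommMonoid M] {T : UTree B}

lemma eval_relabel_mem_eval_powerStep {ℓ : Node → C} (hℓ : ∀ s ∈ T.dom, r (T.label s) (ℓ s))
    (s : Node) (hs : s ∈ T.dom) : (T.relabel ℓ).eval step s ∈ T.eval (powerStep r step) s := by
  induction s using T.bottomUp_induction with | _ s ih
  rw [T.eval_eq, UTree.eval_eq]
  exact ⟨_, Set.finsetSum_mem_finsetSum _ _ _ fun t ht =>
    ih t ht (UTree.mem_dom_of_mem_children ht), ℓ s, hℓ s hs, rfl⟩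

lemma exists_relabel_of_mem_eval_powerStep (s : Node) (hs : s ∈ T.dom) {m : M}
    (hm : m ∈ T.eval (powerStep r step) s) :
    ∃ ℓ : Node → C, (∀ t ∈ T.dom, s <+: t → r (T.label t) (ℓ t)) ∧
      (T.relabel ℓ).eval step s = m := by
  classical
  induction s using T.bottomUp_induction generalizing m with | _ s ih
  rw [T.eval_eq] at hm
  obtain ⟨_, hm, c, hc, rfl⟩ := hm
  obtain ⟨g, hg, rfl⟩ := (Set.mem_finsetSum _ _ _).1 hm
  have hdom {t : Node} (ht : t ∈ T.children s) : t ∈ T.dom := UTree.mem_dom_of_mem_children ht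
  have : Nonempty C := ⟨c⟩
  choose! ℓ hr hval using fun t ht => ih t ht (hdom ht) (hg ht)
  -- a node strictly below `s` takes its letter from the labelling chosen for the child above it
  let ℓ' (u : Node) : C := if u = s then c else ℓ (u.take (s.length + 1)) u
  have hℓ's : ℓ' s = c := if_pos rfl
  have hℓ' {t u : Node} (ht : t ∈ T.children s) (htu : t <+: u) : ℓ' u = ℓ t u := by
    have hne : u ≠ s := by
      rintro rfl
      have := htu.length_le
      rw [UTree.length_of_mem_children ht] at this
      omega
    simp only [ℓ', if_neg hne, UTree.take_eq_of_mem_children ht htu]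
  refine ⟨ℓ', fun u hu hsu => ?_, ?_⟩
  · obtain rfl | ⟨t, ht, htu⟩ := (UTree.prefix_iff_eq_or_exists_mem_children hu).1 hsu
    · rwa [hℓ's]
    · rw [hℓ' ht htu]
      exact hr t ht u hu htu
  · have hsum : ∑ t ∈ T.children s, (T.relabel ℓ').eval step t = ∑ t ∈ T.children s, g t :=
      Finset.sum_congr rfl fun t ht => by
        rw [T.eval_relabel_congr step t (hdom ht) fun u _ htu => hℓ' ht htu, hval t ht]
    rw [UTree.eval_eq]
    exact congrArg₂ step hℓ's hsum

end PowerStep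

namespace Recognizable

lemma relabelings {L : Set (UTree C)} (hL : Recognizable L) (r : B → C → Prop) :
    Recognizable {T : UTree B |
      ∃ ℓ : Node → C, (∀ s ∈ T.dom, r (T.label s) (ℓ s)) ∧ T.relabel ℓ ∈ L} := by
  obtain ⟨M, _, _, step, F, hM, hF⟩ := hL
  refine ⟨Set M, _, inferInstance, powerStep r step, {S | (S ∩ F).Nonempty}, hM.set,
    fun T => ⟨?_, ?_⟩⟩
  · rintro ⟨ℓ, hℓ, hmem⟩
    exact ⟨_, eval_relabel_mem_eval_powerStep hℓ [] T.nil_mem, (hF _).1 hmem⟩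
  · rintro ⟨m, hm, hmF⟩
    obtain ⟨ℓ, hℓ, rfl⟩ := exists_relabel_of_mem_eval_powerStep [] T.nil_mem hm
    exact ⟨ℓ, fun s hs => hℓ s hs List.nil_prefix, (hF _).2 hmF⟩

end Recognizable

section TruthStep

variable {M : Type*} (step : B → M → M) (P : B → M → Prop)

open Classical in
/-- Evaluation by `step`, together with the truth value of whether some node at or below the
current one satisfies the property `P` of its label and value. -/
noncomputable def truthStep (b : B) (m : M × Truth) : M × Truth :=
  (step b m.1, if P b (step b m.1) ∨ m.2 = ⊤ then ⊤ else 0)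

variable {step P} [AddCommMonoid M] {T : UTree B}

lemma eval_truthStep_fst (s : Node) : (T.eval (truthStep step P) s).1 = T.eval step s :=
  T.map_eval (AddMonoidHom.fst M Truth) (fun _ _ => rfl) s

lemma eval_truthStep_snd_eq_top_iff (s : Node) (hs : s ∈ T.dom) :
    (T.eval (truthStep step P) s).2 = ⊤ ↔
      ∃ t ∈ T.dom, s <+: t ∧ P (T.label t) (T.eval step t) := by
  classical
  induction s using T.bottomUp_induction with | _ s ih
  have hchildren : (∑ t ∈ T.children s, T.eval (truthStep step P) t).2 = ⊤ ↔
      ∃ u ∈ T.children s, ∃ t ∈ T.dom, u <+: t ∧ P (T.label t) (T.eval step t) := by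
    rw [Prod.snd_sum, WithTop.sum_eq_top]
    exact exists_congr fun u => and_congr_right fun hu => ih u hu (UTree.mem_dom_of_mem_children hu)
  have hroot : (T.eval (truthStep step P) s).2 = ⊤ ↔ P (T.label s) (T.eval step s) ∨
      (∑ t ∈ T.children s, T.eval (truthStep step P) t).2 = ⊤ := by
    rw [← eval_truthStep_fst (P := P) s, T.eval_eq]
    exact Truth.ite_eq_top_iff _
  rw [hroot, hchildren]
  constructor
  · rintro (h | ⟨u, hu, t, ht, hut, h⟩)
    · exact ⟨s, hs, List.prefix_rfl, h⟩
    · exact ⟨t, ht, (UTree.prefix_of_mem_children hu).trans hut, h⟩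
  · rintro ⟨t, ht, hst, h⟩
    obtain rfl | ⟨u, hu, hut⟩ := (UTree.prefix_iff_eq_or_exists_mem_children ht).1 hst
    · exact Or.inl h
    · exact Or.inr ⟨u, hu, t, ht, hut, h⟩

end TruthStep

namespace Recognizable

lemma exists_eval {M : Type} [AddCommMonoid M] [Finite M] (hM : IsAperiodic M) (step : B → M → M)
    (P : B → M → Prop) :
    Recognizable {T : UTree B | ∃ s ∈ T.dom, P (T.label s) (T.eval step s)} := by
  refine ⟨M × Truth, _, inferInstance, truthStep step P, {m | m.2 = ⊤},
    hM.prod Truth.isAperiodic, fun T => ?_⟩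
  have hroot := eval_truthStep_snd_eq_top_iff (step := step) (P := P) [] T.nil_mem
  simp only [List.nil_prefix, true_and] at hroot
  exact hroot.symm

lemma exists_label (P : B → Prop) : Recognizable {T : UTree B | ∃ s ∈ T.dom, P (T.label s)} :=
  exists_eval (M := Unit) ⟨0, fun _ _ _ => rfl⟩ (fun _ _ => ()) fun b _ => P b

lemma exists_label_prefix_label (P Q : B → Prop) : Recognizable
    {T : UTree B | ∃ s ∈ T.dom, P (T.label s) ∧ ∃ t ∈ T.dom, s <+: t ∧ Q (T.label t)} := by
  let step : B → Unit × Truth → Unit × Truth := truthStep (fun _ _ => ()) fun b _ => Q b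
  convert exists_eval (IsAperiodic.prod ⟨0, fun _ _ _ => rfl⟩ Truth.isAperiodic) step
    (fun b m => P b ∧ m.2 = ⊤) using 1
  ext T
  exact exists_congr fun s => and_congr_right fun hs =>
    and_congr_right' (eval_truthStep_snd_eq_top_iff (P := fun b _ => Q b) s hs).symm

/-- Two nodes with labels in `P` are distinct iff some set of nodes separates them, so uniqueness is
the complement of a projection. -/
lemma existsUnique_label (P : B → Prop) :
    Recognizable {T : UTree B | ∃ s ∈ T.dom, ∀ t ∈ T.dom, P (T.label t) ↔ t = s} := by
  let separated : Set (UTree B) := {T | ∃ ℓ : Node → B × Prop,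
    (∀ s ∈ T.dom, T.label s = (ℓ s).1) ∧ T.relabel ℓ ∈
      {T | ∃ s ∈ T.dom, P (T.label s).1 ∧ (T.label s).2} ∩
      {T | ∃ s ∈ T.dom, P (T.label s).1 ∧ ¬(T.label s).2}}
  have hsep : Recognizable separated :=
    ((exists_label fun c : B × Prop => P c.1 ∧ c.2).inter
      (exists_label fun c => P c.1 ∧ ¬c.2)).relabelings fun b c => b = c.1
  convert (exists_label P).inter hsep.compl using 1
  ext T
  constructor
  · rintro ⟨s, hs, h⟩
    refine ⟨⟨s, hs, (h s hs).2 rfl⟩, ?_⟩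
    rintro ⟨ℓ, hℓ, ⟨t, ht, hPt, htrue⟩, ⟨u, hu, hPu, hfalse⟩⟩
    obtain rfl := (h t ht).1 (by rw [hℓ t ht]; exact hPt)
    obtain rfl := (h u hu).1 (by rw [hℓ u hu]; exact hPu)
    exact hfalse htrue
  · rintro ⟨⟨s, hs, hPs⟩, hnot⟩
    refine ⟨s, hs, fun t ht => ⟨fun hPt => ?_, fun hts => hts ▸ hPs⟩⟩
    by_contra hts
    exact hnot ⟨fun u => (T.label u, u = s), fun _ _ => rfl, ⟨s, hs, hPs, rfl⟩, ⟨t, ht, hPt, hts⟩⟩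

end Recognizable

/-! ### MSO-definable languages are recognizable -/

/-- A letter together with the variables that mark a node carrying it: `fo i` says that the node is
the value of the first-order variable `i`, and `so i` that it belongs to the set variable `i`. -/
@[ext]
structure MarkedLetter (A : Type) where
  letter : A
  fo : ℕ → Prop
  so : ℕ → Prop

namespace MarkedLetter

/-- Changes whether the node is the value of the first-order variable `n`. -/
def setFO (b : MarkedLetter A) (n : ℕ) (p : Prop) : MarkedLetter A :=
  { b with fo := Function.update b.fo n p }

/-- Changes whether the node belongs to the set variable `n`. -/
def setSO (b : MarkedLetter A) (n : ℕ) (p : Prop) : MarkedLetter A :=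
  { b with so := Function.update b.so n p }

lemma setFO_fo (b : MarkedLetter A) (n : ℕ) (p : Prop) : (b.setFO n p).fo n = p := by
  simp only [setFO, Function.update_self]

lemma setSO_so (b : MarkedLetter A) (n : ℕ) (p : Prop) : (b.setSO n p).so n = p := by
  simp only [setSO, Function.update_self]

end MarkedLetter

/-- The tree `T` and the valuations `v` and `V` encoded as a single tree. -/
def UTree.expand (T : UTree A) (v : ℕ → Node) (V : ℕ → Set Node) : UTree (MarkedLetter A) :=
  T.relabel fun s => ⟨T.label s, fun i => v i = s, fun i => s ∈ V i⟩

lemma UTree.expand_update_fo_label (T : UTree A) (v : ℕ → Node) (V : ℕ → Set Node) (n : ℕ)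
    (s t : Node) : (T.expand (Function.update v n s) V).label t =
      ((T.expand v V).label t).setFO n (s = t) :=
  MarkedLetter.ext rfl (funext fun i => Function.apply_update (fun _ u => u = t) v n s i) rfl

lemma UTree.expand_update_so_label (T : UTree A) (v : ℕ → Node) (V : ℕ → Set Node) (n : ℕ)
    (S : Set Node) (t : Node) : (T.expand v (Function.update V n S)).label t =
      ((T.expand v V).label t).setSO n (t ∈ S) :=
  MarkedLetter.ext rfl rfl (funext fun i => Function.apply_update (fun _ U => t ∈ U) V n S i)

namespace MSOu

/-- A formula is recognized if its models, encoded by `UTree.expand`, are exactly the encodings in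
some recognizable language. -/
def Recognized (φ : MSOu A) : Prop :=
  ∃ L : Set (UTree (MarkedLetter A)), Recognizable L ∧
    ∀ (T : UTree A) (v : ℕ → Node) (V : ℕ → Set Node), (∀ i, v i ∈ T.dom) →
      (φ.Sat T v V ↔ T.expand v V ∈ L)

namespace Recognized

variable {φ ψ : MSOu A}

lemma eq (x y : ℕ) : Recognized (.eq x y : MSOu A) := by
  refine ⟨_, Recognizable.exists_label fun b => b.fo x ∧ b.fo y, fun T v V hv => ⟨fun h => ?_, ?_⟩⟩
  · exact ⟨v x, hv x, rfl, Eq.symm h⟩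
  · rintro ⟨s, -, hx, hy⟩
    exact hx.trans hy.symm

lemma desc (x y : ℕ) : Recognized (.desc x y : MSOu A) := by
  refine ⟨_, Recognizable.exists_label_prefix_label (fun b => b.fo x) (fun b => b.fo y),
    fun T v V hv => ⟨fun h => ?_, ?_⟩⟩
  · exact ⟨v x, hv x, rfl, v y, hv y, h.2.2, rfl⟩
  · rintro ⟨_, hx, rfl, _, hy, hxy, rfl⟩
    exact ⟨hx, hy, hxy⟩

lemma lab (a : A) (x : ℕ) : Recognized (.lab a x) := by
  refine ⟨_, Recognizable.exists_label fun b => b.fo x ∧ b.letter = a,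
    fun T v V hv => ⟨fun h => ?_, ?_⟩⟩
  · exact ⟨v x, hv x, rfl, h.2⟩
  · rintro ⟨_, hx, rfl, ha⟩
    exact ⟨hx, ha⟩

lemma mem (X x : ℕ) : Recognized (.mem X x : MSOu A) := by
  refine ⟨_, Recognizable.exists_label fun b => b.fo x ∧ b.so X,
    fun T v V hv => ⟨fun h => ?_, ?_⟩⟩
  · exact ⟨v x, hv x, rfl, h⟩
  · rintro ⟨_, -, rfl, hX⟩
    exact hX

lemma not (hφ : Recognized φ) : Recognized φ.not := by
  obtain ⟨L, hL, h⟩ := hφ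
  exact ⟨Lᶜ, hL.compl, fun T v V hv => not_congr (h T v V hv)⟩

lemma and (hφ : Recognized φ) (hψ : Recognized ψ) : Recognized (φ.and ψ) := by
  obtain ⟨L, hL, h⟩ := hφ
  obtain ⟨L', hL', h'⟩ := hψ
  exact ⟨L ∩ L', hL.inter hL', fun T v V hv => and_congr (h T v V hv) (h' T v V hv)⟩

lemma exFO (n : ℕ) (hφ : Recognized φ) : Recognized (φ.exFO n) := by
  obtain ⟨L, hL, h⟩ := hφ
  have hmodel (T : UTree A) (v : ℕ → Node) (V : ℕ → Set Node) (hv : ∀ i, v i ∈ T.dom) (s : Node)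
      (hs : s ∈ T.dom) : φ.Sat T (Function.update v n s) V ↔
        T.expand (Function.update v n s) V ∈ L :=
    h T _ V fun i => by
      obtain rfl | hi := eq_or_ne i n
      · rwa [Function.update_self]
      · rw [Function.update_of_ne hi]
        exact hv i
  refine ⟨_, (hL.inter (Recognizable.existsUnique_label fun b => b.fo n)).relabelings
    fun b c => c = b.setFO n (c.fo n),
    fun T v V hv => ⟨?_, ?_⟩⟩
  · rintro ⟨s, hs, hsat⟩
    have hfo (t : Node) : ((T.expand (Function.update v n s) V).label t).fo n ↔ t = s := by
      rw [T.expand_update_fo_label, MarkedLetter.setFO_fo]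
      exact eq_comm
    refine ⟨(T.expand (Function.update v n s) V).label, fun t _ => ?_,
      (hmodel T v V hv s hs).1 hsat, s, hs, fun t _ => hfo t⟩
    rw [T.expand_update_fo_label, MarkedLetter.setFO_fo]
  · rintro ⟨ℓ, hℓ, hmem, s, hs, huniq⟩
    have hlabel (t : Node) (ht : t ∈ T.dom) :
        ℓ t = (T.expand (Function.update v n s) V).label t := by
      have hst : (ℓ t).fo n = (s = t) := propext ((huniq t ht).trans eq_comm)
      rw [T.expand_update_fo_label, ← hst]
      exact hℓ t ht
    exact ⟨s, hs, (hmodel T v V hv s hs).2 ((hL.relabel_congr T hlabel).1 hmem)⟩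

lemma exSO (n : ℕ) (hφ : Recognized φ) : Recognized (φ.exSO n) := by
  obtain ⟨L, hL, h⟩ := hφ
  refine ⟨_, hL.relabelings fun b c => c = b.setSO n (c.so n),
    fun T v V hv => ⟨?_, ?_⟩⟩
  · rintro ⟨S, -, hsat⟩
    refine ⟨(T.expand v (Function.update V n S)).label, fun t _ => ?_, (h T _ _ hv).1 hsat⟩
    rw [T.expand_update_so_label, MarkedLetter.setSO_so]
  · rintro ⟨ℓ, hℓ, hmem⟩
    let S : Set Node := {t | t ∈ T.dom ∧ (ℓ t).so n}
    have hlabel (t : Node) (ht : t ∈ T.dom) :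
        ℓ t = (T.expand v (Function.update V n S)).label t := by
      have hS : (t ∈ S) = (ℓ t).so n := propext (and_iff_right ht)
      rw [T.expand_update_so_label, hS]
      exact hℓ t ht
    exact ⟨S, fun t ht => ht.1, (h T _ _ hv).2 ((hL.relabel_congr T hlabel).1 hmem)⟩

end Recognized

theorem recognized (φ : MSOu A) : Recognized φ := by
  induction φ with
  | eq x y => exact .eq x y
  | desc x y => exact .desc x y
  | lab a x => exact .lab a x
  | mem X x => exact .mem X x
  | not φ ih => exact ih.not
  | and φ ψ ih ih' => exact ih.and ih'
  | exFO n φ ih => exact ih.exFO n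
  | exSO n φ ih => exact ih.exSO n

/-- The unary query of a formula whose only free variable is the first-order variable `0`. -/
def query (φ : MSOu A) (T : UTree A) : Set Node :=
  {s | s ∈ T.dom ∧ φ.Sat T (fun _ => s) (fun _ => ∅)}

/-- The trees with exactly one marked node, selected by the query of `φ`. -/
def markedLanguage (φ : MSOu A) : Set (UTree (A × Prop)) :=
  {T | ∃ s ∈ (φ.query (T.map Prod.fst)), ∀ t ∈ T.dom, (T.label t).2 ↔ t = s}

theorem recognizable_markedLanguage (φ : MSOu A) : Recognizable φ.markedLanguage := by
  obtain ⟨L, hL, h⟩ := φ.recognized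
  convert (Recognizable.existsUnique_label fun b : A × Prop => b.2).inter
    (hL.preimage_map fun b => ⟨b.1, fun _ => b.2, fun _ => False⟩) using 1
  ext T
  have hmark (s : Node) (hs : s ∈ T.dom) (huniq : ∀ t ∈ T.dom, (T.label t).2 ↔ t = s) :
      φ.Sat (T.map Prod.fst) (fun _ => s) (fun _ => ∅) ↔
        T.map (fun b => (⟨b.1, fun _ => b.2, fun _ => False⟩ : MarkedLetter A)) ∈ L := by
    refine (h _ _ _ fun _ => hs).trans (hL.relabel_congr T fun t ht => ?_)
    exact MarkedLetter.ext rfl (funext fun _ => propext (eq_comm.trans (huniq t ht).symm)) rfl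
  constructor
  · rintro ⟨s, ⟨hs, hsat⟩, huniq⟩
    exact ⟨⟨s, hs, huniq⟩, (hmark s hs huniq).1 hsat⟩
  · rintro ⟨⟨s, hs, huniq⟩, hmem⟩
    exact ⟨s, ⟨hs, (hmark s hs huniq).2 hmem⟩, huniq⟩

end MSOu

/-! ### Recognizable languages are accepted by counting automata -/

/-- Shannon expansion with respect to the variables in `U`. -/
lemma BForm.exists_eval_iff {V : Type} (U : Finset V) (G : (V → Prop) → Prop)
    (hG : DependsOn G U) : ∃ β : BForm V, ∀ f, β.Eval f ↔ G f := by
  classical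
  induction U using Finset.induction_on generalizing G with
  | empty =>
    have hconst (f g : V → Prop) : G f ↔ G g := iff_of_eq (hG fun _ h => absurd h (by simp))
    by_cases h : G fun _ => True
    · exact ⟨.tru, fun f => iff_of_true trivial ((hconst _ f).1 h)⟩
    · exact ⟨.not .tru, fun f => iff_of_false (not_not_intro trivial) fun hf =>
        h ((hconst f _).1 hf)⟩
  | insert u U _ ih =>
    have hdep (p : Prop) : DependsOn (fun f => G (Function.update f u p)) U := by
      refine fun f g hfg => hG fun w hw => ?_
      obtain rfl | hwu := eq_or_ne w u
      · simp only [Function.update_self]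
      · simpa only [Function.update_of_ne hwu] using
          hfg w ((Finset.mem_insert.1 hw).resolve_left hwu)
    obtain ⟨β₁, h₁⟩ := ih _ (hdep True)
    obtain ⟨β₀, h₀⟩ := ih _ (hdep False)
    refine ⟨.not (.and (.not (.and (.var u) β₁)) (.not (.and (.not (.var u)) β₀))), fun f => ?_⟩
    have hupdate (p : Prop) (hp : f u ↔ p) : Function.update f u p = f :=
      Function.update_eq_self_iff.2 (propext hp.symm)
    by_cases hu : f u
    · simp only [BForm.Eval, h₁, h₀, hu, hupdate True (iff_true_intro hu)]
      tauto
    · simp only [BForm.Eval, h₁, h₀, hu, hupdate False (iff_false_intro hu)]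
      tauto

lemma BForm.exists_eval_count_iff {Q : Type} [Finite Q] (K : ℕ) (P : (Q → ℕ) → Prop)
    (hP : ∀ n, P (fun q => min (n q) K) ↔ P n) :
    ∃ β : BForm (Q × ℕ), ∀ n : Q → ℕ, β.Eval (fun qk => qk.2 + 1 ≤ n qk.1) ↔ P n := by
  have := Fintype.ofFinite Q
  let count (f : Q × ℕ → Prop) (q : Q) : ℕ := {k | k < K ∧ f (q, k)}.ncard
  have hdep : DependsOn (fun f => P (count f))
      ↑(Finset.univ ×ˢ Finset.range K : Finset (Q × ℕ)) := by
    refine fun f g hfg => congrArg P (funext fun q => congrArg Set.ncard (Set.ext fun k => ?_))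
    exact and_congr_right fun hk => iff_of_eq (hfg (q, k) (by simpa using hk))
  have hcount (n : Q → ℕ) : count (fun qk => qk.2 + 1 ≤ n qk.1) = fun q => min (n q) K := by
    ext q
    rw [← Finset.card_range (min (n q) K), ← Set.ncard_coe_finset]
    refine congrArg Set.ncard (Set.ext fun k => ?_)
    simp only [Set.mem_ofPred_eq, Finset.mem_coe, Finset.mem_range]
    omega
  obtain ⟨β, hβ⟩ := BForm.exists_eval_iff _ _ hdep
  exact ⟨β, fun n => by rw [hβ, hcount, hP]⟩

lemma UTree.ncard_childIndices (T : UTree A) {s : Node} (hs : s ∈ T.dom) (p : Node → Prop)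
    [DecidablePred p] :
    {i : ℕ | s ++ [i] ∈ T.dom ∧ p (s ++ [i])}.ncard = {t ∈ T.children s | p t}.card := by
  have hinj : Function.Injective fun i : ℕ => s ++ [i] := fun i j h => by simpa using h
  rw [← Set.ncard_image_of_injective _ hinj, ← Set.ncard_coe_finset]
  congr 1
  ext t
  simp only [Set.mem_image, Set.mem_ofPred_eq, Finset.coe_filter, mem_children]
  constructor
  · rintro ⟨i, ⟨hi, hpi⟩, rfl⟩
    exact ⟨⟨hs, hi, i, rfl⟩, hpi⟩
  · rintro ⟨⟨-, ht, i, rfl⟩, hp⟩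
    exact ⟨i, ⟨ht, hp⟩, rfl⟩

/-- The automaton guesses the second components of the labels together with the values of the
evaluation; aperiodicity turns its transitions into threshold conditions. -/
theorem Recognizable.exists_cnuta [Finite C] {L : Set (UTree (A × C))} (hL : Recognizable L) :
    ∃ (N : CNUTA A) (mark : N.Q → C), ∀ (T : UTree A) (c : Node → C),
      T.relabel (fun s => (T.label s, c s)) ∈ L ↔
        ∃ ρ, N.IsRun T ρ ∧ ρ [] ∈ N.F ∧ ∀ s, mark (ρ s) = c s := by
  classical
  obtain ⟨M, _, _, step, F, ⟨K, hK⟩, hF⟩ := hL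
  have := Fintype.ofFinite (M × C)
  have hδ (q : M × C) (a : A) : ∃ β : BForm ((M × C) × ℕ), ∀ n : M × C → ℕ,
      β.Eval (fun qk => qk.2 + 1 ≤ n qk.1) ↔ q.1 = step (a, q.2) (∑ p, n p • p.1) := by
    refine BForm.exists_eval_count_iff K _ fun n => ?_
    have hmin (p : M × C) : min (n p) K • p.1 = n p • p.1 := by
      obtain h | h := le_total (n p) K
      · rw [min_eq_left h]
      · rw [min_eq_right h, hK _ h]
    simp only [hmin]
  choose δ hδ using hδ
  let N : CNUTA A := ⟨M × C, this, {q | q.1 ∈ F}, δ⟩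
  have hrun (T : UTree A) (ρ : Node → M × C) : N.IsRun T ρ ↔
      ∀ s ∈ T.dom, (ρ s).1 = step (T.label s, (ρ s).2) (∑ t ∈ T.children s, (ρ t).1) := by
    refine forall₂_congr fun s hs => (hδ (ρ s) (T.label s) fun p =>
      {i : ℕ | s ++ [i] ∈ T.dom ∧ ρ (s ++ [i]) = p}.ncard).trans ?_
    have hsum : ∑ p, {i : ℕ | s ++ [i] ∈ T.dom ∧ ρ (s ++ [i]) = p}.ncard • p.1
        = ∑ t ∈ T.children s, (ρ t).1 := by
      rw [← Finset.sum_fiberwise' (T.children s) ρ Prod.fst]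
      refine Finset.sum_congr rfl fun p _ => ?_
      rw [T.ncard_childIndices hs (ρ · = p), Finset.sum_const]
    rw [hsum]
  refine ⟨N, Prod.snd, fun T c => (hF _).trans ⟨fun h => ?_, ?_⟩⟩
  · exact ⟨fun s => ((T.relabel fun s => (T.label s, c s)).eval step s, c s),
      (hrun T _).2 fun s _ => UTree.eval_eq _ _ s, h, fun _ => rfl⟩
  · rintro ⟨ρ, hρ, hρF, hc⟩
    obtain rfl : (fun s => (ρ s).2) = c := funext hc
    have heval := UTree.eq_eval (T := T.relabel fun s => (T.label s, (ρ s).2))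
      ((hrun T ρ).1 hρ) [] T.nil_mem
    exact heval ▸ hρF

/-- The automaton guesses the selected node. -/
theorem MSOu.exists_cqa (φ : MSOu A) : ∃ QA : CQA A, ∀ T,
    QA.existsSem T = φ.query T ∧ (QA.N.Accepts T ↔ (φ.query T).Nonempty) := by
  obtain ⟨N, mark, hN⟩ := φ.recognizable_markedLanguage.exists_cnuta
  have hmem (T : UTree A) (c : Node → Prop) :
      (∃ ρ, N.IsRun T ρ ∧ ρ [] ∈ N.F ∧ ∀ s, mark (ρ s) = c s) ↔
        ∃ s ∈ φ.query T, ∀ t ∈ T.dom, c t ↔ t = s :=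
    (hN T c).symm
  refine ⟨⟨N, {p | mark p.1}⟩, fun T => ⟨Set.ext fun s => ⟨?_, fun hs => ?_⟩, ?_, ?_⟩⟩
  · rintro ⟨hs, ρ, hρ, hρF, hmark⟩
    obtain ⟨t, ht, huniq⟩ := (hmem T _).1 ⟨ρ, hρ, hρF, fun _ => rfl⟩
    rwa [(huniq s hs).1 hmark]
  · obtain ⟨ρ, hρ, hρF, hmark⟩ := (hmem T (· = s)).2 ⟨s, hs, fun _ _ => Iff.rfl⟩
    exact ⟨hs.1, ρ, hρ, hρF, (hmark s).mpr rfl⟩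
  · rintro ⟨ρ, hρ, hρF⟩
    obtain ⟨t, ht, -⟩ := (hmem T _).1 ⟨ρ, hρ, hρF, fun _ => rfl⟩
    exact ⟨t, ht⟩
  · rintro ⟨s, hs⟩
    obtain ⟨ρ, hρ, hρF, -⟩ := (hmem T (· = s)).2 ⟨s, hs, fun _ _ => Iff.rfl⟩
    exact ⟨ρ, hρ, hρF⟩

/-! ### Languages of counting automata are MSO-definable -/

/-- A property of trees with valuations is MSO-definable if it is the satisfaction relation of some
formula. Formulas are built through the closure properties of this predicate. -/
def MSODefinable (R : UTree A → (ℕ → Node) → (ℕ → Set Node) → Prop) : Prop :=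
  ∃ φ : MSOu A, ∀ T v V, φ.Sat T v V ↔ R T v V

namespace MSODefinable

section Closure

variable {R S : UTree A → (ℕ → Node) → (ℕ → Set Node) → Prop}

lemma of_iff (hR : MSODefinable R) (h : ∀ T v V, R T v V ↔ S T v V) : MSODefinable S := by
  obtain ⟨φ, hφ⟩ := hR
  exact ⟨φ, fun T v V => (hφ T v V).trans (h T v V)⟩

lemma not (hR : MSODefinable R) : MSODefinable fun T v V => ¬R T v V := by
  obtain ⟨φ, hφ⟩ := hR
  exact ⟨.not φ, fun T v V => not_congr (hφ T v V)⟩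

lemma and (hR : MSODefinable R) (hS : MSODefinable S) :
    MSODefinable fun T v V => R T v V ∧ S T v V := by
  obtain ⟨φ, hφ⟩ := hR
  obtain ⟨ψ, hψ⟩ := hS
  exact ⟨.and φ ψ, fun T v V => and_congr (hφ T v V) (hψ T v V)⟩

lemma imp (hR : MSODefinable R) (hS : MSODefinable S) :
    MSODefinable fun T v V => R T v V → S T v V :=
  (hR.and hS.not).not.of_iff fun _ _ _ => not_and_not_right

lemma exFO (n : ℕ) (hR : MSODefinable R) :
    MSODefinable fun T v V => ∃ s ∈ T.dom, R T (Function.update v n s) V := by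
  obtain ⟨φ, hφ⟩ := hR
  exact ⟨.exFO n φ, fun T v V => exists_congr fun s => and_congr_right' (hφ _ _ _)⟩

lemma allFO (n : ℕ) (hR : MSODefinable R) :
    MSODefinable fun T v V => ∀ s ∈ T.dom, R T (Function.update v n s) V :=
  (hR.not.exFO n).not.of_iff fun T v V => by simp only [not_exists, not_and_not_right]

lemma exSO (n : ℕ) (hR : MSODefinable R) :
    MSODefinable fun T v V => ∃ W : Set Node, W ⊆ ↑T.dom ∧ R T v (Function.update V n W) := by
  obtain ⟨φ, hφ⟩ := hR
  exact ⟨.exSO n φ, fun T v V => exists_congr fun W => and_congr_right' (hφ _ _ _)⟩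

lemma exSO_finset (I : Finset ℕ) (hR : MSODefinable R) :
    MSODefinable fun T v V => ∃ W : ℕ → Set Node,
      (∀ i ∈ I, W i ⊆ ↑T.dom) ∧ (∀ i ∉ I, W i = V i) ∧ R T v W := by
  induction I using Finset.induction_on with
  | empty =>
    refine hR.of_iff fun T v V => ⟨fun h => ⟨V, by simp, fun _ _ => rfl, h⟩, ?_⟩
    rintro ⟨W, -, hW, h⟩
    obtain rfl : W = V := funext fun i => hW i (Finset.notMem_empty i)
    exact h
  | insert n I hn ih =>
    refine (ih.exSO n).of_iff fun T v V => ⟨?_, ?_⟩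
    · rintro ⟨S, hS, W, hdom, hW, h⟩
      refine ⟨W, fun i hi => ?_, fun i hi => ?_, h⟩
      · obtain rfl | hi := Finset.mem_insert.1 hi
        · rwa [hW i hn, Function.update_self]
        · exact hdom i hi
      · rw [Finset.mem_insert, not_or] at hi
        rw [hW i hi.2, Function.update_of_ne hi.1]
    · rintro ⟨W, hdom, hW, h⟩
      refine ⟨W n, hdom n (Finset.mem_insert_self n I), W,
        fun i hi => hdom i (Finset.mem_insert_of_mem hi), fun i hi => ?_, h⟩
      obtain rfl | hin := eq_or_ne i n
      · rw [Function.update_self]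
      · rw [Function.update_of_ne hin, hW i (by simp [hi, hin])]

end Closure

lemma const (p : Prop) : MSODefinable fun (_ : UTree A) _ _ => p := by
  have htrue : MSODefinable fun (_ : UTree A) _ _ => True :=
    ⟨.not (.and (.eq 0 0) (.not (.eq 0 0))), fun T v V => by simp [MSOu.Sat]⟩
  by_cases hp : p
  · simpa only [hp] using htrue
  · simpa only [hp, not_true_eq_false] using htrue.not

section Finite

variable {ι : Type*} [Finite ι] {R : ι → UTree A → (ℕ → Node) → (ℕ → Set Node) → Prop}

lemma forall_finite (h : ∀ i, MSODefinable (R i)) : MSODefinable fun T v V => ∀ i, R i T v V := by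
  have := Fintype.ofFinite ι
  have hfinset (I : Finset ι) : MSODefinable fun T v V => ∀ i ∈ I, R i T v V := by
    induction I using Finset.cons_induction with
    | empty => exact (const True).of_iff fun T v V => by simp
    | cons i I _ ih => exact ((h i).and ih).of_iff fun T v V => by simp
  exact (hfinset Finset.univ).of_iff fun T v V => by simp

lemma exists_finite (h : ∀ i, MSODefinable (R i)) : MSODefinable fun T v V => ∃ i, R i T v V :=
  (forall_finite fun i => (h i).not).not.of_iff fun T v V => by simp only [not_forall, not_not]

end Finite

lemma eq (x y : ℕ) : MSODefinable fun (_ : UTree A) v _ => v x = v y :=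
  ⟨.eq x y, fun _ _ _ => Iff.rfl⟩

lemma desc (x y : ℕ) : MSODefinable fun (T : UTree A) v _ => T.descR (v x) (v y) :=
  ⟨.desc x y, fun _ _ _ => Iff.rfl⟩

lemma lab (a : A) (x : ℕ) : MSODefinable fun T v _ => v x ∈ T.dom ∧ T.label (v x) = a :=
  ⟨.lab a x, fun _ _ _ => Iff.rfl⟩

lemma mem (X x : ℕ) : MSODefinable fun (_ : UTree A) v V => v x ∈ V X :=
  ⟨.mem X x, fun _ _ _ => Iff.rfl⟩

end MSODefinable

lemma UTree.childR_iff_covers (T : UTree A) (s t : Node) : T.childR s t ↔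
    T.descR s t ∧ s ≠ t ∧ ∀ u ∈ T.dom, T.descR s u ∧ T.descR u t → ¬(u ≠ s ∧ u ≠ t) := by
  constructor
  · rintro ⟨hs, ht, i, rfl⟩
    refine ⟨⟨hs, ht, List.prefix_append _ _⟩, by simp, ?_⟩
    rintro u - ⟨⟨-, -, hsu⟩, ⟨-, -, hut⟩⟩ ⟨hus, hut'⟩
    obtain h | h := List.prefix_concat_iff.1 hut
    · exact hut' h
    · exact hus (h.eq_of_length_le hsu.length_le)
  · rintro ⟨⟨hs, ht, hst⟩, hne, hcov⟩
    obtain rfl | ⟨u, hu, hut⟩ := (prefix_iff_eq_or_exists_mem_children ht).1 hst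
    · exact absurd rfl hne
    have hsu := mem_children.1 hu
    have hus : u ≠ s := fun h => by simpa [h] using length_of_mem_children hu
    obtain rfl : u = t := by
      by_contra hut'
      exact hcov u hsu.2.1 ⟨⟨hs, hsu.2.1, prefix_of_mem_children hu⟩, hsu.2.1, ht, hut⟩ ⟨hus, hut'⟩
    exact hsu

open Classical in
lemma UTree.succ_le_card_children_iff (T : UTree A) (s : Node) (S : Set Node) (k : ℕ) :
    k + 1 ≤ {t ∈ T.children s | t ∈ S}.card ↔ ∃ W : Set Node, W ⊆ ↑T.dom ∧
      (∀ t ∈ T.dom, t ∈ W → t ∈ S) ∧ (∃ t ∈ T.dom, T.childR s t ∧ t ∈ S ∧ t ∉ W) ∧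
      k ≤ {t ∈ T.children s | t ∈ W}.card := by
  constructor
  · intro h
    obtain ⟨t, ht⟩ := Finset.card_pos.1 (k.succ_pos.trans_le h)
    obtain ⟨htc, htS⟩ := Finset.mem_filter.1 ht
    obtain ⟨W, hW⟩ : ∃ W : Set Node, ∀ u, u ∈ W ↔ u ∈ T.dom ∧ u ∈ S ∧ u ≠ t :=
      ⟨{u | u ∈ T.dom ∧ u ∈ S ∧ u ≠ t}, fun _ => Iff.rfl⟩
    refine ⟨W, fun u hu => ((hW u).1 hu).1, fun u _ hu => ((hW u).1 hu).2.1,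
      ⟨t, mem_dom_of_mem_children htc, mem_children.1 htc, htS, fun ht => ((hW t).1 ht).2.2 rfl⟩,
      ?_⟩
    rw [← Nat.le_sub_iff_add_le (k.succ_pos.trans_le h), ← Finset.card_erase_of_mem ht] at h
    refine h.trans (Finset.card_le_card fun u hu => ?_)
    obtain ⟨hut, hu⟩ := Finset.mem_erase.1 hu
    obtain ⟨huc, huS⟩ := Finset.mem_filter.1 hu
    exact Finset.mem_filter.2 ⟨huc, (hW u).2 ⟨mem_dom_of_mem_children huc, huS, hut⟩⟩
  · rintro ⟨W, -, hWS, ⟨t, -, htc, htS, htW⟩, hk⟩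
    refine hk.trans_lt (Finset.card_lt_card ⟨fun u hu => ?_, fun hsub => htW ?_⟩)
    · obtain ⟨huc, huW⟩ := Finset.mem_filter.1 hu
      exact Finset.mem_filter.2 ⟨huc, hWS u (mem_dom_of_mem_children huc) huW⟩
    · exact (Finset.mem_filter.1 (hsub (Finset.mem_filter.2 ⟨mem_children.2 htc, htS⟩))).2

namespace MSODefinable

lemma child (x y : ℕ) : MSODefinable fun (T : UTree A) v _ => T.childR (v x) (v y) := by
  let z := x + y + 1
  have hx : x ≠ z := by omega
  have hy : y ≠ z := by omega
  refine ((desc x y).and ((eq x y).not.and ((((desc x z).and (desc z y)).imp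
    ((eq z x).not.and (eq z y).not).not).allFO z))).of_iff fun T _ _ => ?_
  simp only [T.childR_iff_covers, Function.update_self, Function.update_of_ne hx,
    Function.update_of_ne hy]

lemma root_mem (X : ℕ) : MSODefinable fun (_ : UTree A) _ V => ([] : Node) ∈ V X := by
  refine ((((desc 0 1).allFO 1).and (mem X 0)).exFO 0).of_iff fun T v V => ?_
  simp only [Function.update_self, Function.update_of_ne zero_ne_one]
  constructor
  · rintro ⟨s, -, hroot, hs⟩
    rwa [List.prefix_nil.1 (hroot [] T.nil_mem).2.2] at hs
  · exact fun h => ⟨[], T.nil_mem, fun t ht => ⟨T.nil_mem, ht, List.nil_prefix⟩, h⟩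

open Classical in
lemma le_card_children (X k : ℕ) : MSODefinable fun (T : UTree A) v V =>
    k ≤ {t ∈ T.children (v 1) | t ∈ V X}.card := by
  induction k generalizing X with
  | zero => exact (const True).of_iff fun T v V => by simp
  | succ k ih =>
    have hX : X ≠ X + 1 := X.succ_ne_self.symm
    refine (((((mem (X + 1) 0).imp (mem X 0)).allFO 0).and
      ((((child 1 0).and ((mem X 0).and (mem (X + 1) 0).not)).exFO 0).and
        (ih (X + 1)))).exSO (X + 1)).of_iff fun T v V => ?_
    simp only [T.succ_le_card_children_iff, Function.update_self, Function.update_of_ne hX,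
      Function.update_of_ne one_ne_zero]

open Classical in
lemma eval_bform {Q : Type} (e : Q → ℕ) (β : BForm (Q × ℕ)) :
    MSODefinable fun (T : UTree A) v V => β.Eval fun qk =>
      qk.2 + 1 ≤ {t ∈ T.children (v 1) | t ∈ V (e qk.1)}.card := by
  induction β with
  | tru => exact const True
  | var qk => exact le_card_children _ _
  | not β ih => exact ih.not
  | and β γ ihβ ihγ => exact ihβ.and ihγ

end MSODefinable

section Represents

variable {Q : Type} {T : UTree A} {e : Q → ℕ} {V : ℕ → Set Node} {ρ : Node → Q}

/-- On the nodes of `T`, the sets `V (e q)` are the level sets of the state assignment `ρ`. -/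
def Represents (T : UTree A) (e : Q → ℕ) (V : ℕ → Set Node) (ρ : Node → Q) : Prop :=
  ∀ s ∈ T.dom, ∀ q, s ∈ V (e q) ↔ ρ s = q

lemma exists_represents_iff :
    (∃ ρ, Represents T e V ρ) ↔ ∀ s ∈ T.dom, ∃! q, s ∈ V (e q) := by
  constructor
  · rintro ⟨ρ, hρ⟩ s hs
    exact ⟨ρ s, (hρ s hs _).2 rfl, fun q hq => ((hρ s hs q).1 hq).symm⟩
  · intro h
    have : Nonempty Q := (h [] T.nil_mem).nonempty
    choose! ρ hρ huniq using h
    exact ⟨ρ, fun s hs q => ⟨fun hq => (huniq s hs q hq).symm, fun hq => hq ▸ hρ s hs⟩⟩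

open Classical in
lemma Represents.card_children (h : Represents T e V ρ) {s : Node} (hs : s ∈ T.dom) (q : Q) :
    {t ∈ T.children s | t ∈ V (e q)}.card =
      {i : ℕ | s ++ [i] ∈ T.dom ∧ ρ (s ++ [i]) = q}.ncard := by
  rw [T.ncard_childIndices hs (ρ · = q)]
  exact congrArg Finset.card (Finset.filter_congr fun t ht =>
    h t (UTree.mem_dom_of_mem_children ht) q)

lemma MSODefinable.exists_represented [Finite Q] (he : Function.Injective e)
    {R : UTree A → (ℕ → Node) → (ℕ → Set Node) → Prop} (hR : MSODefinable R)
    {P : UTree A → (ℕ → Node) → (Node → Q) → Prop}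
    (hRP : ∀ T v V ρ, Represents T e V ρ → (R T v V ↔ P T v ρ)) :
    MSODefinable fun T v _ => ∃ ρ, P T v ρ := by
  classical
  have := Fintype.ofFinite Q
  have hpartition : MSODefinable fun (T : UTree A) _ V => ∀ s ∈ T.dom, ∃! q, s ∈ V (e q) :=
    ((exists_finite fun q => (mem (e q) 0).and (forall_finite fun q' =>
      (mem (e q') 0).imp (const (q' = q)))).allFO 0).of_iff fun T v V => by
        simp only [Function.update_self, ExistsUnique]
  refine ((hpartition.and hR).exSO_finset (Finset.univ.image e)).of_iff fun T v V => ⟨?_, ?_⟩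
  · rintro ⟨W, -, -, hW, h⟩
    obtain ⟨ρ, hρ⟩ := exists_represents_iff.2 hW
    exact ⟨ρ, (hRP T v W ρ hρ).1 h⟩
  · rintro ⟨ρ, hρP⟩
    let W (i : ℕ) : Set Node :=
      if i ∈ Finset.univ.image e then {s | s ∈ T.dom ∧ e (ρ s) = i} else V i
    have hWe (i : ℕ) (hi : i ∈ Finset.univ.image e) : W i = {s | s ∈ T.dom ∧ e (ρ s) = i} :=
      if_pos hi
    have hρ : Represents T e W ρ := fun s hs q => by
      rw [hWe _ (Finset.mem_image_of_mem e (Finset.mem_univ q))]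
      exact (and_iff_right hs).trans he.eq_iff
    exact ⟨W, fun i hi => (hWe i hi).symm ▸ fun s hs => hs.1, fun i hi => if_neg hi,
      exists_represents_iff.1 ⟨ρ, hρ⟩, (hRP T v W ρ hρ).2 hρP⟩

end Represents

open Classical in
lemma Represents.isRun_iff {N : CNUTA A} {T : UTree A} {e : N.Q → ℕ} {V : ℕ → Set Node}
    {ρ : Node → N.Q} (h : Represents T e V ρ) :
    N.IsRun T ρ ↔ ∀ s ∈ T.dom, ∀ q a, s ∈ V (e q) → s ∈ T.dom ∧ T.label s = a →
      (N.δ q a).Eval fun qk => qk.2 + 1 ≤ {t ∈ T.children s | t ∈ V (e qk.1)}.card := by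
  refine forall₂_congr fun s hs => ?_
  simp only [h.card_children hs, h s hs]
  exact ⟨by rintro hrun _ _ rfl ⟨-, rfl⟩; exact hrun, fun hrun => hrun _ _ rfl ⟨hs, rfl⟩⟩

theorem CQA.msoDefinable_existsSem [Finite A] (QA : CQA A) :
    MSODefinable fun T v _ => v 0 ∈ QA.existsSem T := by
  have := QA.N.fintype_Q
  obtain ⟨e, he⟩ := exists_injective_nat QA.N.Q
  have hrun := (MSODefinable.forall_finite fun q => MSODefinable.forall_finite fun a : A =>
    (MSODefinable.mem (e q) 1).imp
      ((MSODefinable.lab a 1).imp (MSODefinable.eval_bform e (QA.N.δ q a)))).allFO 1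
  have hacc : MSODefinable fun (_ : UTree A) _ V => ∃ q, [] ∈ V (e q) ∧ q ∈ QA.N.F :=
    MSODefinable.exists_finite fun q => (MSODefinable.root_mem (e q)).and (.const _)
  have hsel : MSODefinable fun (T : UTree A) v V => ∃ p : QA.N.Q × A,
      v 0 ∈ V (e p.1) ∧ (v 0 ∈ T.dom ∧ T.label (v 0) = p.2) ∧ p ∈ QA.S :=
    MSODefinable.exists_finite fun p =>
      (MSODefinable.mem (e p.1) 0).and ((MSODefinable.lab p.2 0).and (.const _))
  refine (MSODefinable.exists_represented he (hrun.and (hacc.and hsel)) (P := fun T v ρ =>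
    QA.N.IsRun T ρ ∧ ρ [] ∈ QA.N.F ∧ v 0 ∈ T.dom ∧ (ρ (v 0), T.label (v 0)) ∈ QA.S)
    fun T v V ρ h => ?_).of_iff fun _ _ _ => ?_
  · refine and_congr ?_ (and_congr ?_ ⟨?_, ?_⟩)
    · simpa only [Function.update_self] using h.isRun_iff.symm
    · simp only [h [] T.nil_mem, exists_eq_left']
    · rintro ⟨⟨q, a⟩, hq, ⟨hdom, rfl⟩, hS⟩
      obtain rfl := (h _ hdom q).1 hq
      exact ⟨hdom, hS⟩
    · rintro ⟨hdom, hS⟩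
      exact ⟨_, (h _ hdom _).2 rfl, ⟨hdom, rfl⟩, hS⟩
  · constructor
    · rintro ⟨ρ, hρ, hF, hdom, hS⟩
      exact ⟨hdom, ρ, hρ, hF, hS⟩
    · rintro ⟨hdom, ρ, hρ, hF, hS⟩
      exact ⟨ρ, hρ, hF, hdom, hS⟩


/-! ### The equivalences -/

lemma MSOu.DefinesU.query_eq {φ : MSOu A} {Q : UTree A → Set Node} (h : φ.DefinesU Q)
    {T : UTree A} (hQ : Q T ⊆ ↑T.dom) : φ.query T = Q T := by
  ext s
  have hs : s ∈ T.dom → (s ∈ Q T ↔ φ.Sat T (fun _ => s) fun _ => ∅) := fun hs => by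
    simpa only [Function.update_eq_self] using h T (fun _ => s) (fun _ => ∅) s hs
  exact ⟨fun hmem => (hs hmem.1).2 hmem.2, fun hmem => ⟨hQ hmem, (hs (hQ hmem)).1 hmem⟩⟩

lemma MSODefinable.exists_definesU {Q : UTree A → Set Node}
    (hQ : MSODefinable fun T v _ => v 0 ∈ Q T) : ∃ φ : MSOu A, φ.DefinesU Q := by
  obtain ⟨φ, hφ⟩ := hQ
  exact ⟨φ, fun T v V s _ => by simp only [hφ, Function.update_self]⟩

lemma MSOu.DefinesU.compl {φ : MSOu A} {Q : UTree A → Set Node} (h : φ.DefinesU Q) :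
    φ.not.DefinesU fun T => ↑T.dom \ Q T := fun T v V s hs =>
  (and_iff_right hs).trans (not_congr (h T v V s hs))

/-- The query automaton with the complementary selection set. It exchanges, up to complementation,
the existential and the universal semantics. -/
def CQA.compl (QA : CQA A) : CQA A :=
  ⟨QA.N, QA.Sᶜ⟩

lemma CQA.existsSem_subset_dom (QA : CQA A) (T : UTree A) : QA.existsSem T ⊆ ↑T.dom :=
  fun _ hs => hs.1

lemma CQA.forallSem_compl (QA : CQA A) (T : UTree A) :
    QA.compl.forallSem T = ↑T.dom \ QA.existsSem T := by
  ext s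
  simp only [forallSem, existsSem, compl, Set.mem_sdiff, Set.mem_ofPred_eq, Finset.mem_coe,
    not_and, not_exists]
  tauto

lemma CQA.existsSem_compl (QA : CQA A) (T : UTree A) :
    QA.compl.existsSem T = ↑T.dom \ QA.forallSem T := by
  have hcompl : QA.compl.compl = QA := congrArg (CQA.mk QA.N) (compl_compl QA.S)
  have h := QA.compl.forallSem_compl T
  rw [hcompl] at h
  rw [h, Set.sdiff_sdiff_cancel_left (QA.compl.existsSem_subset_dom T)]

lemma CNUTA.accepts_iff_existsSem_nonempty (N : CNUTA A) (T : UTree A) :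
    N.Accepts T ↔ (CQA.existsSem ⟨N, Set.univ⟩ T).Nonempty := by
  constructor
  · rintro ⟨ρ, hρ, hF⟩
    exact ⟨[], T.nil_mem, ρ, hρ, hF, trivial⟩
  · rintro ⟨s, -, ρ, hρ, hF, -⟩
    exact ⟨ρ, hρ, hF⟩

theorem exists_definesB_iff_accepts [Finite A] (L : Set (UTree A)) :
    (∃ φ : MSOu A, φ.DefinesB L) ↔ ∃ N : CNUTA A, ∀ T, N.Accepts T ↔ T ∈ L := by
  constructor
  · rintro ⟨φ, hφ⟩
    obtain ⟨QA, hQA⟩ := φ.exists_cqa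
    refine ⟨QA.N, fun T => (hQA T).2.trans ⟨?_, fun hT => ⟨[], T.nil_mem, (hφ T _ _).1 hT⟩⟩⟩
    rintro ⟨s, -, hsat⟩
    exact (hφ T _ _).2 hsat
  · rintro ⟨N, hN⟩
    obtain ⟨φ, hφ⟩ := (CQA.msoDefinable_existsSem ⟨N, Set.univ⟩).exFO 0
    refine ⟨φ, fun T v V => ?_⟩
    rw [hφ, ← hN, N.accepts_iff_existsSem_nonempty]
    simp only [Function.update_self]
    exact exists_congr fun s => (and_iff_right_of_imp fun hs => hs.1).symm

theorem exists_definesU_iff_existsSem [Finite A] {Q : UTree A → Set Node}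
    (hQ : ∀ T, Q T ⊆ ↑T.dom) :
    (∃ φ : MSOu A, φ.DefinesU Q) ↔ ∃ QA : CQA A, ∀ T, Q T = QA.existsSem T := by
  constructor
  · rintro ⟨φ, hφ⟩
    obtain ⟨QA, hQA⟩ := φ.exists_cqa
    exact ⟨QA, fun T => by rw [(hQA T).1, hφ.query_eq (hQ T)]⟩
  · rintro ⟨QA, hQA⟩
    obtain rfl : Q = QA.existsSem := funext hQA
    exact QA.msoDefinable_existsSem.exists_definesU

theorem exists_definesU_iff_forallSem [Finite A] {Q : UTree A → Set Node}
    (hQ : ∀ T, Q T ⊆ ↑T.dom) :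
    (∃ φ : MSOu A, φ.DefinesU Q) ↔ ∃ QA : CQA A, ∀ T, Q T = QA.forallSem T := by
  have hdiff (T : UTree A) : ↑T.dom \ (↑T.dom \ Q T) = Q T := Set.sdiff_sdiff_cancel_left (hQ T)
  have hexists := exists_definesU_iff_existsSem (Q := fun T => ↑T.dom \ Q T)
    fun _ => Set.sdiff_subset
  constructor
  · rintro ⟨φ, hφ⟩
    obtain ⟨QA, hQA⟩ := hexists.1 ⟨φ.not, hφ.compl⟩
    exact ⟨QA.compl, fun T => by rw [QA.forallSem_compl, ← hQA, hdiff]⟩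
  · rintro ⟨QA, hQA⟩
    obtain ⟨φ, hφ⟩ := hexists.2 ⟨QA.compl, fun T => by rw [QA.existsSem_compl, hQA]⟩
    exact ⟨φ.not, by simpa only [hdiff] using hφ.compl⟩

end

/-- (a) A set of unordered unranked Σ-trees is MSO-definable
iff it is `L_u(A_c)` for some counting nondeterministic unranked tree
automaton. (b) A unary query over unordered unranked Σ-trees is MSO-definable
iff it is definable by a counting query automaton under the existential
semantics, iff it is definable by one under the universal semantics. -/
theorem counting_automata_mso (A : Type) [Fintype A] :
    (∀ L : Set (UTree A),
      (∃ φ : MSOu A, φ.DefinesB L) ↔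
        ∃ N : CNUTA A, ∀ T : UTree A, N.Accepts T ↔ T ∈ L) ∧
    (∀ Q : UTree A → Set Node, (∀ T, Q T ⊆ ↑T.dom) →
      (((∃ φ : MSOu A, φ.DefinesU Q) ↔
          ∃ QA : CQA A, ∀ T, Q T = QA.existsSem T) ∧
       ((∃ φ : MSOu A, φ.DefinesU Q) ↔
          ∃ QA : CQA A, ∀ T, Q T = QA.forallSem T))) := by
  refine ⟨exists_definesB_iff_accepts, fun Q hQ => ⟨?_, ?_⟩⟩
  · exact exists_definesU_iff_existsSem hQ
  · exact exists_definesU_iff_forallSem hQ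

end UnrankedTrees
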